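/- arXiv:2106.10647 — 2 statements merged into one kernel-verified Lean document; each statement's English description precedes it below -/
import Mathlib

section
/- Let I, J ⊆ ℝ be closed bounded intervals, f : I → I and g : J → J continuous maps each admitting no 2-cycle, and let x ∈ I, y ∈ J. Set a_n = fⁿ(x) and b_n = gⁿ(y). If for every n one has (a_{n+1} < a_n ⟺ b_{n+1} < b_n) and (a_{n+1} = a_n ⟺ b_{n+1} = b_n), then (a_n) and (b_n) have the same order pattern: for all m, n, a_m < a_n if and only if b_m < b_n. -/
def No2 (a b : ℝ) (f : ℝ → ℝ) : Prop :=
  ¬ ∃ x ∈ Set.Icc a b, ∃ y ∈ Set.Icc a b, x ≠ y ∧ f x = y ∧ f y = x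

/-- intermediate value: a fixed-point free crossing is impossible -/
theorem crossing {h : ℝ → ℝ} {u v : ℝ} (huv : u ≤ v) (hc : ContinuousOn h (Set.Icc u v))
    (hs : (h u ≤ u ∧ v ≤ h v) ∨ (u ≤ h u ∧ h v ≤ v)) : ∃ q ∈ Set.Icc u v, h q = q := by
  have hc' : ContinuousOn (fun t => h t - t) (Set.Icc u v) := hc.sub continuousOn_id
  rcases hs with ⟨h1, h2⟩ | ⟨h1, h2⟩
  · obtain ⟨q, hq, e⟩ := intermediate_value_Icc huv hc'
      (show (0 : ℝ) ∈ Set.Icc (h u - u) (h v - v) from ⟨by linarith, by linarith⟩)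
    exact ⟨q, hq, by simp only at e; linarith⟩
  · obtain ⟨q, hq, e⟩ := intermediate_value_Icc' huv hc'
      (show (0 : ℝ) ∈ Set.Icc (h v - v) (h u - u) from ⟨by linarith, by linarith⟩)
    exact ⟨q, hq, by simp only at e; linarith⟩

theorem two_step {a b : ℝ} {f : ℝ → ℝ} (hf : ContinuousOn f (Set.Icc a b))
    (hm : Set.MapsTo f (Set.Icc a b) (Set.Icc a b)) (h2 : No2 a b f)
    {x : ℝ} (hx : x ∈ Set.Icc a b) (hlt : x < f x) : x < f (f x) := by
  by_contra hcon
  have hle : f (f x) ≤ x := not_lt.mp hcon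
  have hfix : ∀ t ∈ Set.Icc a b, f (f t) = t → f t = t := by
    intro t ht e
    by_contra hne
    exact h2 ⟨t, ht, f t, hm ht, fun e' => hne e'.symm, rfl, e⟩
  have hlt2 : f (f x) < x := lt_of_le_of_ne hle (fun e => by have := hfix x hx e; linarith)
  have hff : ContinuousOn (fun t => f (f t)) (Set.Icc a b) := hf.comp hf hm
  have hsub : Set.Icc a x ⊆ Set.Icc a b := Set.Icc_subset_Icc_right hx.2
  have hSc : IsClosed {t ∈ Set.Icc a x | t ≤ f (f t)} :=
    isClosed_Icc.isClosed_le continuousOn_id (hff.mono hsub)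
  have hScomp : IsCompact {t ∈ Set.Icc a x | t ≤ f (f t)} :=
    isCompact_Icc.of_isClosed_subset hSc (fun t ht => ht.1)
  have haI : a ∈ Set.Icc a b := ⟨le_rfl, hx.1.trans hx.2⟩
  obtain ⟨p, ⟨hpI, hp⟩, hmax⟩ := hScomp.exists_isGreatest
    ⟨a, ⟨le_rfl, hx.1⟩, (hm (hm haI)).1⟩
  have hbig : ∀ t, p < t → t ≤ x → f (f t) < t := by
    intro t h1 h3
    by_contra hh
    have := hmax (show t ∈ {t ∈ Set.Icc a x | t ≤ f (f t)} from
      ⟨⟨hpI.1.trans h1.le, h3⟩, not_lt.mp hh⟩)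
    linarith
  have hIcc : ∀ t, p ≤ t → Set.Icc t x ⊆ Set.Icc a b := fun t ht s hs =>
    ⟨hpI.1.trans (ht.trans hs.1), hs.2.trans hx.2⟩
  have hup : ∀ t, p < t → t ≤ x → t < f t := by
    intro t h1 h3
    by_contra hh
    obtain ⟨q, hq, e⟩ := crossing h3 (hf.mono (hIcc t h1.le)) (Or.inl ⟨not_lt.mp hh, hlt.le⟩)
    have := hbig q (h1.trans_le hq.1) hq.2
    rw [e, e] at this
    exact lt_irrefl _ this
  obtain ⟨q, hq, e⟩ := crossing hpI.2 (hff.mono (hIcc p le_rfl)) (Or.inr ⟨hp, hle⟩)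
  have hqp : q = p := by
    rcases hq.1.eq_or_lt with h | h
    · exact h.symm
    · have := hbig q h hq.2
      linarith
  subst hqp
  have hfq : f q = q := hfix q (hsub hpI) e
  obtain ⟨t, ht, et⟩ := intermediate_value_Icc hpI.2 (hf.mono (hIcc q le_rfl))
    (show x ∈ Set.Icc (f q) (f x) from ⟨by rw [hfq]; exact hpI.2, hlt.le⟩)
  have hqt : q < t := by
    rcases ht.1.eq_or_lt with h | h
    · subst h
      rw [hfq] at et
      rw [et] at hfq
      linarith
    · exact h
  have := hbig t hqt ht.2
  rw [et] at this
  linarith [ht.2]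

theorem between {a b : ℝ} {f : ℝ → ℝ} (hf : ContinuousOn f (Set.Icc a b))
    (hm : Set.MapsTo f (Set.Icc a b) (Set.Icc a b)) (h2 : No2 a b f)
    {r s : ℝ} (hr : r ∈ Set.Icc a b) (hs : s ∈ Set.Icc a b) (hrs : r < s) (hsr : s ≤ f r) :
    r < f s := by
  by_contra hcon
  have hle : f s ≤ r := not_lt.mp hcon
  have hsub : Set.Icc r s ⊆ Set.Icc a b := Set.Icc_subset_Icc hr.1 hs.2
  obtain ⟨t, ht, e⟩ := intermediate_value_Icc' hrs.le (hf.mono hsub)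
    (show s ∈ Set.Icc (f s) (f r) from ⟨by linarith, hsr⟩)
  have hts : t < s := by
    rcases ht.2.eq_or_lt with h | h
    · subst h
      linarith
    · exact h
  have := two_step hf hm h2 (hsub ht) (by rw [e]; exact hts)
  rw [e] at this
  linarith [ht.1]

theorem up {a b : ℝ} {f : ℝ → ℝ} (hf : ContinuousOn f (Set.Icc a b))
    (hm : Set.MapsTo f (Set.Icc a b) (Set.Icc a b)) (h2 : No2 a b f)
    {x : ℝ} (hx : x ∈ Set.Icc a b) (hlt : x < f x) (n : ℕ) : x < f^[n+1] x := by
  induction n using Nat.strong_induction_on with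
  | _ n ih =>
    rcases n with _ | n
    · simpa using hlt
    have hI : ∀ k, f^[k] x ∈ Set.Icc a b := fun k => hm.iterate k hx
    have hge : ∀ k ≤ n + 1, x ≤ f^[k] x := by
      intro k hk
      rcases k with _ | k
      · simp
      · exact (ih k (by omega)).le
    have hs : x < f^[n+1] x := ih n (by omega)
    have hex : ∃ k, f^[n+1] x ≤ f^[k] x := ⟨n + 1, le_rfl⟩
    classical
    obtain ⟨k, hk, hmin⟩ : ∃ k, f^[n+1] x ≤ f^[k] x ∧ ∀ j < k, ¬ f^[n+1] x ≤ f^[j] x :=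
      ⟨Nat.find hex, Nat.find_spec hex, fun j hj => Nat.find_min hex hj⟩
    have hkn : k ≤ n + 1 := by
      by_contra hh
      exact hmin (n+1) (by omega) le_rfl
    rcases k with _ | k
    · simp only [Function.iterate_zero, id] at hk
      linarith
    · have h3 := not_le.mp (hmin k (by omega))
      rw [Function.iterate_succ_apply' f k] at hk
      have h4 := between hf hm h2 (hI k) (hI (n+1)) h3 hk
      rw [Function.iterate_succ_apply' f (n+1)]
      exact (hge k (by omega)).trans_lt h4

theorem down {a b : ℝ} {f : ℝ → ℝ} (hf : ContinuousOn f (Set.Icc a b))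
    (hm : Set.MapsTo f (Set.Icc a b) (Set.Icc a b)) (h2 : No2 a b f)
    {x : ℝ} (hx : x ∈ Set.Icc a b) (hlt : f x < x) (n : ℕ) : f^[n+1] x < x := by
  have hneg : Set.MapsTo (fun t : ℝ => -t) (Set.Icc (-b) (-a)) (Set.Icc a b) := by
    intro t ht
    exact ⟨by linarith [ht.2], by linarith [ht.1]⟩
  have hneg' : Set.MapsTo (fun t : ℝ => -t) (Set.Icc a b) (Set.Icc (-b) (-a)) := by
    intro t ht
    exact ⟨by linarith [ht.2], by linarith [ht.1]⟩
  have hc : ContinuousOn (fun t => -f (-t)) (Set.Icc (-b) (-a)) :=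
    (hf.comp continuous_neg.continuousOn hneg).neg
  have hm' : Set.MapsTo (fun t => -f (-t)) (Set.Icc (-b) (-a)) (Set.Icc (-b) (-a)) :=
    fun t ht => hneg' (hm (hneg ht))
  have h2' : No2 (-b) (-a) (fun t => -f (-t)) := by
    rintro ⟨u, hu, v, hv, hne, e1, e2⟩
    refine h2 ⟨-u, hneg hu, -v, hneg hv, fun e => hne (neg_injective e), ?_, ?_⟩
    · simp only at e1; linarith
    · simp only at e2; linarith
  have hit : ∀ k, (fun t => -f (-t))^[k] (-x) = -(f^[k] x) := by
    intro k
    induction k with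
    | zero => simp
    | succ k ih => rw [Function.iterate_succ_apply', Function.iterate_succ_apply', ih]; simp
  have := up hc hm' h2' (hneg' hx) (by simpa using hlt) n
  rw [hit] at this
  linarith

/-- comparison of later terms is determined by a single step -/
theorem later {a b : ℝ} {f : ℝ → ℝ} (hf : ContinuousOn f (Set.Icc a b))
    (hm : Set.MapsTo f (Set.Icc a b) (Set.Icc a b)) (h2 : No2 a b f)
    {x : ℝ} (hx : x ∈ Set.Icc a b) (m k : ℕ) :
    (f^[m+k+1] x < f^[m] x ↔ f^[m+1] x < f^[m] x) ∧
    (f^[m+k+1] x = f^[m] x ↔ f^[m+1] x = f^[m] x) := by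
  have hI : f^[m] x ∈ Set.Icc a b := hm.iterate m hx
  have e : f^[m+k+1] x = f^[k+1] (f^[m] x) := by
    rw [← Function.iterate_add_apply, show k + 1 + m = m + k + 1 by omega]
  rw [e, Function.iterate_succ_apply' f m]
  generalize f^[m] x = z at hI
  rcases lt_trichotomy (f z) z with h | h | h
  · have := down hf hm h2 hI h k
    exact ⟨iff_of_true this h, iff_of_false this.ne h.ne⟩
  · simp [h, Function.iterate_fixed h]
  · have := up hf hm h2 hI h k
    exact ⟨iff_of_false this.not_gt h.not_gt, iff_of_false this.ne' h.ne'⟩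

/-- For orbits of maps with no 2-cycle, agreement of the step-by-step comparisons
forces agreement of the whole order pattern. -/
theorem stmt_8 (a b c d : ℝ) (hab : a ≤ b) (hcd : c ≤ d)
    (f g : ℝ → ℝ)
    (hf : ContinuousOn f (Set.Icc a b))
    (hfmaps : Set.MapsTo f (Set.Icc a b) (Set.Icc a b))
    (hfno2 : ¬ ∃ x ∈ Set.Icc a b, ∃ y ∈ Set.Icc a b, x ≠ y ∧ f x = y ∧ f y = x)
    (hg : ContinuousOn g (Set.Icc c d))
    (hgmaps : Set.MapsTo g (Set.Icc c d) (Set.Icc c d))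
    (hgno2 : ¬ ∃ x ∈ Set.Icc c d, ∃ y ∈ Set.Icc c d, x ≠ y ∧ g x = y ∧ g y = x)
    (x y : ℝ) (hx : x ∈ Set.Icc a b) (hy : y ∈ Set.Icc c d)
    (hstep : ∀ n : ℕ,
      (f^[n+1] x < f^[n] x ↔ g^[n+1] y < g^[n] y) ∧
      (f^[n+1] x = f^[n] x ↔ g^[n+1] y = g^[n] y)) :
    ∀ m n : ℕ, f^[m] x < f^[n] x ↔ g^[m] y < g^[n] y := by
  intro m n
  have F := fun m k => later hf hfmaps hfno2 hx m k
  have G := fun m k => later hg hgmaps hgno2 hy m k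
  rcases lt_trichotomy m n with h | h | h
  · obtain ⟨k, rfl⟩ := Nat.exists_eq_add_of_lt h
    have e1 := (F m k).1.trans ((hstep m).1.trans (G m k).1.symm)
    have e2 := (F m k).2.trans ((hstep m).2.trans (G m k).2.symm)
    rw [← not_iff_not, not_lt, not_lt, le_iff_lt_or_eq, le_iff_lt_or_eq, e1, e2]
  · subst h
    simp
  · obtain ⟨k, rfl⟩ := Nat.exists_eq_add_of_lt h
    exact (F n k).1.trans ((hstep n).1.trans (G n k).1.symm)
end

section
/- Define g : [−1, 1] → ℝ by g(x) = (x³/5)·sin(1/x) for x ≠ 0 and g(0) = 0. Then g maps [−1, 1] into itself, is Lipschitz with constant 4/5 (hence is a contraction), admits no 2-cycle, and is universal for the first Sharkovsky class on [−1, 1]: for every continuous map h : [−1, 1] → [−1, 1] admitting no 2-cycle and every p ∈ [−1, 1], there exists q ∈ [−1, 1] such that the sequences (hⁿ(p))_{n≥0} and (gⁿ(q))_{n≥0} have the same order pattern. -/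
open Set

/-- No 2-cycle, in convenient form. -/
def NoTwo (h : ℝ → ℝ) : Prop := ∀ x ∈ Icc (-1 : ℝ) 1, h (h x) = x → h x = x

lemma ivt_eq {f : ℝ → ℝ} {a b m : ℝ} (hab : a ≤ b) (hf : ContinuousOn f (Icc a b))
    (h : (f a ≤ m ∧ m ≤ f b) ∨ (f b ≤ m ∧ m ≤ f a)) : ∃ x ∈ Icc a b, f x = m := by
  rcases h with h | h
  · exact intermediate_value_Icc hab hf h
  · exact intermediate_value_Icc' hab hf h

lemma two_up {h : ℝ → ℝ} (hc : ContinuousOn h (Icc (-1 : ℝ) 1))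
    (hm : MapsTo h (Icc (-1 : ℝ) 1) (Icc (-1 : ℝ) 1)) (h2 : NoTwo h)
    {x : ℝ} (hx : x ∈ Icc (-1 : ℝ) 1) (hlt : x < h x) : x < h (h x) := by
  by_contra hcon
  have hF : ContinuousOn (fun y => h (h y) - y) (Icc (-1 : ℝ) 1) :=
    (hc.comp hc hm).sub continuousOn_id
  have hne : h (h x) ≠ x := fun e => hlt.ne' (h2 x hx e)
  have hFx : h (h x) < x := lt_of_le_of_ne (not_lt.mp hcon) hne
  have hcx : Icc (-1 : ℝ) x ⊆ Icc (-1 : ℝ) 1 := Icc_subset_Icc le_rfl hx.2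
  have hcl : IsCompact (Icc (-1 : ℝ) x ∩ (fun y => h (h y) - y) ⁻¹' (Ici 0)) := by
    refine isCompact_Icc.of_isClosed_subset ?_ inter_subset_left
    exact (hF.mono hcx).preimage_isClosed_of_isClosed isClosed_Icc isClosed_Ici
  have hne' : (Icc (-1 : ℝ) x ∩ (fun y => h (h y) - y) ⁻¹' (Ici 0)).Nonempty := by
    refine ⟨-1, ⟨le_rfl, hx.1⟩, ?_⟩
    have := (hm (hm (show (-1 : ℝ) ∈ Icc (-1 : ℝ) 1 by simp))).1
    simp only [mem_preimage, mem_Ici]; linarith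
  obtain ⟨w, ⟨hw1, hw2⟩, hwmax⟩ := hcl.exists_isGreatest hne'
  simp only [mem_preimage, mem_Ici] at hw2
  have hwx : w < x := by
    rcases lt_or_eq_of_le hw1.2 with h' | h'
    · exact h'
    · subst h'; linarith
  have hbelow : ∀ y, w < y → y ≤ x → h (h y) < y := by
    intro y hy1 hy2
    by_contra hh
    have := hwmax (show y ∈ _ from ⟨⟨by linarith [hw1.1], hy2⟩, by
      simp only [mem_preimage, mem_Ici]; linarith [not_lt.mp hh]⟩)
    linarith
  have hsub : ∀ y, w ≤ y → Icc y x ⊆ Icc (-1 : ℝ) 1 := fun y hy =>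
    Icc_subset_Icc (hw1.1.trans hy) hx.2
  have hFw : h (h w) = w := by
    obtain ⟨y, hy, hye⟩ := ivt_eq (m := 0) hwx.le (hF.mono (hsub w le_rfl))
      (Or.inr ⟨by linarith, by linarith⟩)
    rcases lt_or_eq_of_le hy.1 with h' | h'
    · have := hbelow y h' hy.2
      linarith
    · subst h'; linarith
  have hw : h w = w := h2 w (hcx hw1) hFw
  have hup : ∀ y, w < y → y ≤ x → y < h y := by
    intro y hy1 hy2
    by_contra hh
    obtain ⟨t, ht, hte⟩ := ivt_eq (f := fun y => h y - y) (m := 0) hy2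
      ((hc.sub continuousOn_id).mono (hsub y hy1.le))
      (Or.inl ⟨by linarith [not_lt.mp hh], by linarith⟩)
    have e : h t = t := by linarith
    have := hbelow t (hy1.trans_le ht.1) ht.2
    rw [e, e] at this; exact lt_irrefl _ this
  obtain ⟨y, hy, hye⟩ := ivt_eq (f := h) (m := (w + x) / 2) hwx.le (hc.mono (hsub w le_rfl))
      (Or.inl ⟨by linarith, by linarith⟩)
  have hwy : w < y := by
    rcases lt_or_eq_of_le hy.1 with h' | h'
    · exact h'
    · subst h'; linarith
  have h1 := hup y hwy hy.2
  have h3 := hup (h y) (by linarith) (by linarith)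
  linarith [hbelow y hwy hy.2]

lemma iter_up {h : ℝ → ℝ} (hc : ContinuousOn h (Icc (-1 : ℝ) 1))
    (hm : MapsTo h (Icc (-1 : ℝ) 1) (Icc (-1 : ℝ) 1)) (h2 : NoTwo h)
    {x : ℝ} (hx : x ∈ Icc (-1 : ℝ) 1) (hlt : x < h x) (n : ℕ) : x < h^[n + 1] x := by
  set T : Set ℝ := {y | y ∈ Icc x 1 ∧ ∀ t ∈ Icc x y, h t ≤ y} with hT
  have hTne : T.Nonempty := ⟨1, ⟨hx.2, le_rfl⟩, fun t ht => (hm ⟨hx.1.trans ht.1, ht.2⟩).2⟩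
  have hTb : BddBelow T := ⟨x, fun y hy => hy.1.1⟩
  set v := sInf T with hv
  have hvx : x ≤ v := le_csInf hTne fun y hy => hy.1.1
  have hv1 : v ≤ 1 := (csInf_le hTb hTne.choose_spec).trans hTne.choose_spec.1.2
  have hle : ∀ t ∈ Icc x v, h t ≤ v := fun t ht =>
    le_csInf hTne fun y hy => hy.2 t ⟨ht.1, ht.2.trans (csInf_le hTb hy)⟩
  have hIs : ∀ {y}, y ∈ Icc x v → y ∈ Icc (-1 : ℝ) 1 := fun hy =>
    ⟨hx.1.trans hy.1, hy.2.trans hv1⟩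
  have hex : ∀ y ∈ Icc x v, ∃ t ∈ Icc x y, y ≤ h t := by
    intro y hy
    obtain ⟨t, ht, htm⟩ := (isCompact_Icc (a := x) (b := y)).exists_isMaxOn ⟨x, le_rfl, hy.1⟩
      (hc.mono (Icc_subset_Icc hx.1 (hy.2.trans hv1)))
    refine ⟨t, ht, ?_⟩
    by_contra hh
    push Not at hh
    have hxt : h x ≤ h t := htm ⟨le_rfl, hy.1⟩
    have : h t ∈ T := ⟨⟨by linarith, by linarith [hy.2]⟩, fun t' ht' =>
      htm ⟨ht'.1, ht'.2.trans hh.le⟩⟩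
    linarith [csInf_le hTb this, hy.2]
  have hgt : ∀ y ∈ Icc x v, x < h y := by
    intro y hy
    by_contra hh
    push Not at hh
    obtain ⟨t, ht, hty⟩ := hex y hy
    obtain ⟨u, hu, hue⟩ := ivt_eq (f := h) (m := y) ht.2
      (hc.mono (Icc_subset_Icc (hx.1.trans ht.1) (hy.2.trans hv1)))
      (Or.inr ⟨hh.trans hy.1, hty⟩)
    rcases lt_or_eq_of_le hu.2 with h' | h'
    · have := two_up hc hm h2 (x := u) (hIs ⟨ht.1.trans hu.1, hu.2.trans hy.2⟩) (by rw [hue]; exact h')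
      rw [hue] at this
      linarith [ht.1, hu.1]
    · subst h'
      have : u = x := le_antisymm (hue ▸ hh) hy.1
      subst this; linarith
  have hmaps : MapsTo h (Icc x v) (Icc x v) := fun y hy => ⟨(hgt y hy).le, hle y hy⟩
  rw [Function.iterate_succ_apply']
  exact hgt _ (hmaps.iterate n ⟨le_rfl, hvx⟩)

lemma iter_down {h : ℝ → ℝ} (hc : ContinuousOn h (Icc (-1 : ℝ) 1))
    (hm : MapsTo h (Icc (-1 : ℝ) 1) (Icc (-1 : ℝ) 1)) (h2 : NoTwo h)
    {x : ℝ} (hx : x ∈ Icc (-1 : ℝ) 1) (hlt : h x < x) (n : ℕ) : h^[n + 1] x < x := by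
  have hneg : ∀ {y : ℝ}, y ∈ Icc (-1 : ℝ) 1 → -y ∈ Icc (-1 : ℝ) 1 := fun hy =>
    ⟨by linarith [hy.2], by linarith [hy.1]⟩
  have hit : ∀ (n : ℕ) (y : ℝ), (fun y => -h (-y))^[n] (-y) = - h^[n] y := by
    intro n
    induction n with
    | zero => simp
    | succ k ih => intro y; simp only [Function.iterate_succ_apply', ih, neg_neg]
  have := iter_up (h := fun y => -h (-y)) (x := -x)
    ((hc.comp continuousOn_neg fun y hy => hneg hy).neg)
    (fun y hy => hneg (hm (hneg hy)))
    (fun y hy e => by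
      simp only [neg_neg] at e ⊢
      have := h2 (-y) (hneg hy) (by linarith)
      linarith)
    (hneg hx) (by simpa using hlt) n
  rw [hit] at this
  linarith

/-- Sequences whose pattern is coded by signs. -/
def Coded (s : ℕ → ℝ) (x : ℕ → ℝ) : Prop :=
  ∀ m n, m < n → (0 < s m → x n < x m) ∧ (s m < 0 → x m < x n) ∧ (s m = 0 → x n = x m)

lemma coded_lt {s x : ℕ → ℝ} (hx : Coded s x) (m n : ℕ) :
    x m < x n ↔ (m < n ∧ s m < 0) ∨ (n < m ∧ 0 < s n) := by
  have e : ∀ a b, a < b → ((x a < x b ↔ s a < 0) ∧ (x b < x a ↔ 0 < s a)) := by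
    intro a b hab
    obtain ⟨h1, h2, h3⟩ := hx a b hab
    rcases lt_trichotomy (s a) 0 with h | h | h
    · have := h2 h
      constructor <;> constructor <;> intro <;> linarith
    · have := h3 h
      constructor <;> constructor <;> intro <;> linarith
    · have := h1 h
      constructor <;> constructor <;> intro <;> linarith
  rcases lt_trichotomy m n with h | h | h
  · rw [(e m n h).1]; simp [h, h.le, not_lt.mpr]
  · subst h; simp
  · rw [(e n m h).2]; simp [h, h.le, not_lt.mpr]

lemma coded_h {h : ℝ → ℝ} (hc : ContinuousOn h (Icc (-1 : ℝ) 1))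
    (hm : MapsTo h (Icc (-1 : ℝ) 1) (Icc (-1 : ℝ) 1)) (h2 : NoTwo h)
    {p : ℝ} (hp : p ∈ Icc (-1 : ℝ) 1) :
    Coded (fun n => h^[n] p - h^[n + 1] p) (fun n => h^[n] p) := by
  intro m n hmn
  obtain ⟨k, rfl⟩ := Nat.exists_eq_add_of_lt hmn
  have hy : h^[m] p ∈ Icc (-1 : ℝ) 1 := hm.iterate m hp
  have e : h^[m + k + 1] p = h^[k + 1] (h^[m] p) := by
    rw [← Function.iterate_add_apply, show k + 1 + m = m + k + 1 by ring]
  simp only [e, Function.iterate_succ_apply' h m p]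
  generalize h^[m] p = y at hy
  refine ⟨fun h' => iter_down hc hm h2 hy (by linarith) k,
    fun h' => iter_up hc hm h2 hy (by linarith) k, fun h' => ?_⟩
  exact Function.iterate_fixed (by linarith) _

section G
variable {g : ℝ → ℝ}

lemma g_abs (hg0 : g 0 = 0) (hgx : ∀ x : ℝ, x ≠ 0 → g x = x ^ 3 / 5 * Real.sin (1 / x)) (x : ℝ) :
    |g x| ≤ |x| ^ 3 / 5 := by
  by_cases hx : x = 0
  · subst hx; simp [hg0]
  · rw [hgx x hx, abs_mul, abs_div, abs_pow, abs_of_pos (by norm_num : (0:ℝ) < 5)]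
    exact mul_le_of_le_one_right (by positivity) (Real.abs_sin_le_one _)

lemma g_abs_le (hg0 : g 0 = 0) (hgx : ∀ x : ℝ, x ≠ 0 → g x = x ^ 3 / 5 * Real.sin (1 / x)) {x : ℝ}
    (hx : |x| ≤ 1) : |g x| ≤ |x| / 5 := by
  have := g_abs hg0 hgx x
  have h3 : |x| ^ 3 ≤ |x| := by
    have := pow_le_of_le_one (abs_nonneg x) hx (n := 3) (by norm_num)
    exact this
  linarith

lemma g_maps (hg0 : g 0 = 0) (hgx : ∀ x : ℝ, x ≠ 0 → g x = x ^ 3 / 5 * Real.sin (1 / x)) :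
    MapsTo g (Icc (-1 : ℝ) 1) (Icc (-1 : ℝ) 1) := by
  intro x hx
  have hx' : |x| ≤ 1 := abs_le.mpr hx
  have := g_abs_le hg0 hgx hx'
  exact abs_le.mp (by linarith)

lemma g_deriv (hg0 : g 0 = 0) (hgx : ∀ x : ℝ, x ≠ 0 → g x = x ^ 3 / 5 * Real.sin (1 / x)) (x : ℝ)
    (hx : x ∈ Icc (-1 : ℝ) 1) : ∃ d, HasDerivAt g d x ∧ |d| ≤ 4 / 5 := by
  by_cases h0 : x = 0
  · subst h0
    refine ⟨0, ?_, by norm_num⟩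
    rw [hasDerivAt_iff_isLittleO]
    simp only [hg0, sub_zero, smul_zero]
    have : (fun x : ℝ => g x) =O[nhds 0] fun x => x ^ 3 := by
      refine Asymptotics.IsBigO.of_bound 1 (Filter.Eventually.of_forall fun y => ?_)
      rw [Real.norm_eq_abs, Real.norm_eq_abs, abs_pow]
      have := g_abs hg0 hgx y
      have : 0 ≤ |y| ^ 3 := by positivity
      linarith
    refine this.trans_isLittleO ?_
    simpa using (Asymptotics.isLittleO_pow_pow (𝕜 := ℝ) (m := 1) (n := 3) (by norm_num))
  · refine ⟨3 * x ^ 2 / 5 * Real.sin (1 / x) - x / 5 * Real.cos (1 / x), ?_, ?_⟩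
    · have h1 : HasDerivAt (fun y : ℝ => y ^ 3 / 5 * Real.sin (y⁻¹))
          (3 * x ^ 2 / 5 * Real.sin (x⁻¹) + x ^ 3 / 5 * (Real.cos (x⁻¹) * (-(x ^ 2)⁻¹))) x := by
        have := ((hasDerivAt_pow 3 x).div_const 5).mul (hasDerivAt_inv h0).sin
        refine (this.congr_deriv ?_)
        norm_num
      have h2 := h1.congr_of_eventuallyEq (f₁ := g) (by
        filter_upwards [isOpen_ne.mem_nhds h0] with y hy
        rw [hgx y hy, one_div])
      refine h2.congr_deriv ?_
      rw [one_div]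
      field_simp
      ring
    · have hx' : |x| ≤ 1 := abs_le.mpr hx
      have e1 : |3 * x ^ 2 / 5 * Real.sin (1 / x)| ≤ 3 / 5 := by
        rw [abs_mul]
        have : |3 * x ^ 2 / 5| ≤ 3 / 5 := by
          rw [abs_of_nonneg (by positivity)]
          have := (sq_le_one_iff_abs_le_one x).mpr hx'
          linarith
        exact (mul_le_of_le_one_right (abs_nonneg _) (Real.abs_sin_le_one _)).trans this
      have e2 : |x / 5 * Real.cos (1 / x)| ≤ 1 / 5 := by
        rw [abs_mul]
        have : |x / 5| ≤ 1 / 5 := by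
          rw [abs_div, abs_of_pos (by norm_num : (0:ℝ) < 5)]; linarith
        exact (mul_le_of_le_one_right (abs_nonneg _) (Real.abs_cos_le_one _)).trans this
      have := abs_sub (3 * x ^ 2 / 5 * Real.sin (1 / x)) (x / 5 * Real.cos (1 / x))
      linarith

lemma g_lip (hg0 : g 0 = 0) (hgx : ∀ x : ℝ, x ≠ 0 → g x = x ^ 3 / 5 * Real.sin (1 / x)) :
    ∀ x ∈ Icc (-1 : ℝ) 1, ∀ y ∈ Icc (-1 : ℝ) 1, |g x - g y| ≤ 4 / 5 * |x - y| := by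
  intro x hx y hy
  choose! d hd1 hd2 using g_deriv hg0 hgx
  exact Convex.norm_image_sub_le_of_norm_hasDerivWithin_le (f := g) (f' := d)
    (fun z hz => (hd1 z hz).hasDerivWithinAt) (fun z hz => hd2 z hz) (convex_Icc _ _) hy hx

lemma g_cont (hg0 : g 0 = 0) (hgx : ∀ x : ℝ, x ≠ 0 → g x = x ^ 3 / 5 * Real.sin (1 / x)) :
    ContinuousOn g (Icc (-1 : ℝ) 1) := by
  intro x hx
  obtain ⟨d, hd, -⟩ := g_deriv hg0 hgx x hx
  exact hd.continuousAt.continuousWithinAt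

lemma coded_g (hg0 : g 0 = 0) (hgx : ∀ x : ℝ, x ≠ 0 → g x = x ^ 3 / 5 * Real.sin (1 / x)) {q : ℝ}
    (hq : q ∈ Icc (-1 : ℝ) 1) : Coded (fun n => g^[n] q) (fun n => g^[n] q) := by
  have key : ∀ (k : ℕ) (y : ℝ), |y| ≤ 1 → |g^[k + 1] y| ≤ |y| / 5 := by
    intro k
    induction k with
    | zero => intro y hy; simpa using g_abs_le hg0 hgx hy
    | succ k ih =>
      intro y hy
      have h1 := ih y hy
      have := abs_nonneg y
      rw [Function.iterate_succ_apply']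
      have h2 := g_abs_le hg0 hgx (x := g^[k + 1] y) (by linarith)
      have := abs_nonneg (g^[k + 1] y)
      linarith
  intro m n hmn
  obtain ⟨k, rfl⟩ := Nat.exists_eq_add_of_lt hmn
  have e : g^[m + k + 1] q = g^[k + 1] (g^[m] q) := by
    rw [← Function.iterate_add_apply, show k + 1 + m = m + k + 1 by ring]
  have hy : |g^[m] q| ≤ 1 := abs_le.mpr ((g_maps hg0 hgx).iterate m hq)
  simp only [e]
  have := key k _ hy
  generalize g^[m] q = y at *
  refine ⟨fun h' => ?_, fun h' => ?_, fun h' => ?_⟩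
  · rw [abs_of_pos h'] at this
    linarith [(abs_le.mp this).2]
  · rw [abs_of_neg h'] at this
    linarith [(abs_le.mp this).1]
  · subst h'; exact Function.iterate_fixed hg0 _

/-- One step: a compact set on side `a`, whose image contains a small interval on side `b`. -/
lemma g_step (hg0 : g 0 = 0) (hgx : ∀ x : ℝ, x ≠ 0 → g x = x ^ 3 / 5 * Real.sin (1 / x))
    (b : ℝ) (hb : b = 1 ∨ b = -1) (δ : ℝ) (hδ : 0 < δ) :
    ∃ l u δ' : ℝ, 0 < l ∧ u ≤ δ ∧ u ≤ 1 ∧ 0 < δ' ∧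
      ∀ y ∈ Icc 0 δ', ∃ x ∈ Icc l u, g x = b * y := by
  obtain ⟨m, hm⟩ := exists_nat_gt (max 1 (1 / δ))
  have hm1 : (1 : ℝ) < m := (le_max_left _ _).trans_lt hm
  have hm2 : 1 / δ < m := (le_max_right _ _).trans_lt hm
  have hpi := Real.pi_gt_three
  have hA : (m : ℝ) < m * (2 * Real.pi) := by nlinarith
  have hs1 : Real.sin (m * (2 * Real.pi)) = 0 := by
    have := Real.sin_add_nat_mul_two_pi 0 m
    simpa using this
  have hs2 : Real.sin (m * (2 * Real.pi) + b * (Real.pi / 2)) = b := by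
    have := Real.sin_add_nat_mul_two_pi (b * (Real.pi / 2)) m
    rw [add_comm] at this
    rw [this]
    rcases hb with rfl | rfl
    · simp
    · simp [Real.sin_neg]
  have hB : (m : ℝ) < m * (2 * Real.pi) + b * (Real.pi / 2) := by
    rcases hb with rfl | rfl <;> nlinarith
  generalize hAe : m * (2 * Real.pi) = A at *
  generalize hBe : A + b * (Real.pi / 2) = B at *
  have hA0 : 0 < A := by linarith
  have hB0 : 0 < B := by linarith
  have hinv : ∀ C : ℝ, m < C → 1 / C ≤ δ ∧ 1 / C ≤ 1 := by
    intro C hC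
    have hC0 : 0 < C := by linarith
    constructor
    · rw [div_le_iff₀ hC0]
      rw [div_lt_iff₀ hδ] at hm2
      nlinarith
    · rw [div_le_iff₀ hC0]; linarith
  have gA : g (1 / A) = 0 := by
    rw [hgx _ (by positivity), one_div_one_div, hs1, mul_zero]
  have gB : g (1 / B) = b * ((1 / B) ^ 3 / 5) := by
    rw [hgx _ (by positivity), one_div_one_div, hs2, mul_comm]
  refine ⟨min (1 / A) (1 / B), max (1 / A) (1 / B), (1 / B) ^ 3 / 5, by positivity,
    max_le (hinv A hA).1 (hinv B hB).1, max_le (hinv A hA).2 (hinv B hB).2, by positivity, ?_⟩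
  intro y hy
  have hcont : ContinuousOn g (uIcc (1 / A) (1 / B)) := by
    refine (g_cont hg0 hgx).mono ?_
    have : (0:ℝ) < min (1 / A) (1 / B) := by positivity
    exact Icc_subset_Icc (by linarith) (max_le (hinv A hA).2 (hinv B hB).2)
  have hmem : b * y ∈ uIcc (g (1 / A)) (g (1 / B)) := by
    rw [gA, gB, mem_uIcc]
    rcases hb with rfl | rfl
    · left; constructor <;> linarith [hy.1, hy.2]
    · right; constructor <;> linarith [hy.1, hy.2]
  exact intermediate_value_uIcc hcont hmem

lemma g_even (hg0 : g 0 = 0) (hgx : ∀ x : ℝ, x ≠ 0 → g x = x ^ 3 / 5 * Real.sin (1 / x)) (x : ℝ) :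
    g (-x) = g x := by
  by_cases h : x = 0
  · subst h; simp
  · rw [hgx x h, hgx (-x) (neg_ne_zero.mpr h), one_div, one_div, inv_neg, Real.sin_neg]; ring

/-- Itineraries along compact sets. -/
lemma itinerary {f : ℝ → ℝ} (hc : ContinuousOn f (Icc (-1 : ℝ) 1)) (K : ℕ → Set ℝ)
    (hK : ∀ n, IsCompact (K n)) (hne : ∀ n, (K n).Nonempty) (hsub : ∀ n, K n ⊆ Icc (-1 : ℝ) 1)
    (himg : ∀ n, ∀ y ∈ K (n + 1), ∃ x ∈ K n, f x = y) :
    ∃ q, ∀ n, f^[n] q ∈ K n := by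
  -- `P n k` : points of `K k` whose next `n` iterates follow the itinerary
  let P : ℕ → ℕ → Set ℝ := fun n => Nat.rec (motive := fun _ => ℕ → Set ℝ) K
    (fun _ S k => K k ∩ f ⁻¹' (S (k + 1))) n
  have P0 : ∀ k, P 0 k = K k := fun k => rfl
  have PS : ∀ n k, P (n + 1) k = K k ∩ f ⁻¹' (P n (k + 1)) := fun n k => rfl
  have Pc : ∀ n k, IsCompact (P n k) := by
    intro n
    induction n with
    | zero => intro k; exact hK k
    | succ n ih =>
      intro k
      rw [PS]
      exact (hK k).of_isClosed_subset ((hc.mono (hsub k)).preimage_isClosed_of_isClosed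
        (hK k).isClosed (ih (k + 1)).isClosed) inter_subset_left
  have PK : ∀ n k, P n k ⊆ K k := by
    intro n k
    cases n with
    | zero => exact subset_rfl
    | succ n => rw [PS]; exact inter_subset_left
  have Pmono : ∀ n k, P (n + 1) k ⊆ P n k := by
    intro n
    induction n with
    | zero => intro k; exact PK 1 k
    | succ n ih =>
      intro k x hx
      have hx' : x ∈ K k ∩ f ⁻¹' (P (n + 1) (k + 1)) := hx
      have : x ∈ K k ∩ f ⁻¹' (P n (k + 1)) := ⟨hx'.1, ih _ hx'.2⟩
      exact this
  have Pne : ∀ n k, (P n k).Nonempty := by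
    intro n
    induction n with
    | zero => intro k; exact hne k
    | succ n ih =>
      intro k
      obtain ⟨y, hy⟩ := ih (k + 1)
      obtain ⟨x, hx, rfl⟩ := himg k y (PK n _ hy)
      exact ⟨x, by rw [PS]; exact ⟨hx, hy⟩⟩
  obtain ⟨q, hq⟩ := IsCompact.nonempty_iInter_of_sequence_nonempty_isCompact_isClosed
    (fun n => P n 0) (fun n => Pmono n 0) (fun n => Pne n 0) (Pc 0 0) (fun n => (Pc n 0).isClosed)
  refine ⟨q, fun n => ?_⟩
  have aux : ∀ n k x, x ∈ P n k → f^[n] x ∈ K (k + n) := by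
    intro n
    induction n with
    | zero => intro k x hx; exact hx
    | succ n ih =>
      intro k x hx
      rw [PS] at hx
      have := ih (k + 1) (f x) hx.2
      rw [Function.iterate_succ_apply]
      convert this using 2
      ring
  have := aux n 0 q (mem_iInter.mp hq n)
  rwa [Nat.zero_add] at this

lemma realize (hg0 : g 0 = 0) (hgx : ∀ x : ℝ, x ≠ 0 → g x = x ^ 3 / 5 * Real.sin (1 / x))
    (s : ℕ → ℝ) (hs : ∀ n, s n = 0 → s (n + 1) = 0) :
    ∃ q ∈ Icc (-1 : ℝ) 1, ∀ n, (0 < s n ↔ 0 < g^[n] q) ∧ (s n < 0 ↔ g^[n] q < 0) := by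
  let c : ℕ → ℝ := fun n => if s n < 0 then -1 else 1
  have hcc : ∀ n, c n = 1 ∨ c n = -1 := by
    intro n; by_cases h : s n < 0 <;> simp [c, h]
  have hsq : ∀ n, c n * c n = 1 := by
    intro n; rcases hcc n with h | h <;> rw [h] <;> norm_num
  choose L U D hL hUδ hU1 hD hstep using g_step hg0 hgx
  let δ : ℕ → {d : ℝ // 0 < d} := fun n => Nat.rec (motive := fun _ => {d : ℝ // 0 < d})
    ⟨1, one_pos⟩ (fun k d => ⟨D (c (k + 1)) (hcc _) d.1 d.2, hD _ _ _ _⟩) n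
  let l : ℕ → ℝ := fun n => L (c (n + 1)) (hcc _) (δ n).1 (δ n).2
  let u : ℕ → ℝ := fun n => U (c (n + 1)) (hcc _) (δ n).1 (δ n).2
  have hl : ∀ n, 0 < l n := fun n => hL _ _ _ _
  have hu1 : ∀ n, u n ≤ 1 := fun n => hU1 _ _ _ _
  have huδ : ∀ n, u n ≤ (δ n).1 := fun n => hUδ _ _ _ _
  have hst : ∀ n, ∀ y ∈ Icc 0 (δ (n + 1)).1, ∃ x ∈ Icc (l n) (u n), g x = c (n + 1) * y :=
    fun n => hstep _ _ _ _
  have hlu : ∀ n, l n ≤ u n := by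
    intro n
    obtain ⟨x, hx, -⟩ := hst n 0 ⟨le_rfl, (δ (n + 1)).2.le⟩
    exact hx.1.trans hx.2
  let K : ℕ → Set ℝ := fun n => if s n = 0 then {0} else (fun x => c n * x) '' Icc (l n) (u n)
  have K0 : ∀ n, s n = 0 → K n = {0} := fun n h => by simp [K, h]
  have K1 : ∀ n, s n ≠ 0 → K n = (fun x => c n * x) '' Icc (l n) (u n) := fun n h => by simp [K, h]
  obtain ⟨q, hq⟩ := itinerary (g_cont hg0 hgx) K
    (fun n => by
      by_cases h : s n = 0
      · rw [K0 n h]; exact isCompact_singleton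
      · rw [K1 n h]; exact isCompact_Icc.image (by fun_prop))
    (fun n => by
      by_cases h : s n = 0
      · rw [K0 n h]; exact singleton_nonempty _
      · rw [K1 n h]; exact (nonempty_Icc.mpr (hlu n)).image _)
    (fun n => by
      by_cases h : s n = 0
      · rw [K0 n h]; rintro x rfl; norm_num
      · rw [K1 n h]
        rintro _ ⟨x, hx, rfl⟩
        have := hl n
        have := hu1 n
        have := hx.1
        have := hx.2
        rcases hcc n with h | h <;> simp only [h] <;> constructor <;> linarith)
    (fun n y hy => by
      by_cases h : s n = 0
      · rw [K0 _ (hs n h)] at hy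
        rw [K0 n h]
        exact ⟨0, rfl, by rw [hg0]; exact hy.symm⟩
      · rw [K1 n h]
        have hy' : ∃ z ∈ Icc 0 (δ (n + 1)).1, y = c (n + 1) * z := by
          by_cases h' : s (n + 1) = 0
          · rw [K0 _ h'] at hy
            exact ⟨0, ⟨le_rfl, (δ (n + 1)).2.le⟩, by rw [mul_zero]; exact hy⟩
          · rw [K1 _ h'] at hy
            obtain ⟨z, hz, rfl⟩ := hy
            exact ⟨z, ⟨(hl (n + 1)).le.trans hz.1, hz.2.trans (huδ (n + 1))⟩, rfl⟩
        obtain ⟨z, hz, rfl⟩ := hy'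
        obtain ⟨x, hx, hxe⟩ := hst n z hz
        refine ⟨c n * x, ⟨x, hx, rfl⟩, ?_⟩
        rw [← hxe]
        rcases hcc n with h | h <;> rw [h]
        · rw [one_mul]
        · rw [neg_one_mul, g_even hg0 hgx])
  refine ⟨q, ?_, fun n => ?_⟩
  · have := hq 0
    by_cases h : s 0 = 0
    · rw [K0 _ h] at this
      have e : q = 0 := this
      rw [e]; norm_num
    · rw [K1 _ h] at this
      obtain ⟨x, hx, hxe⟩ := this
      have e : c 0 * x = q := hxe
      rw [← e]
      have := hl 0
      have := hu1 0
      have := hx.1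
      have := hx.2
      rcases hcc 0 with h | h <;> rw [h] <;> constructor <;> linarith
  · have := hq n
    by_cases h : s n = 0
    · rw [K0 _ h] at this
      have e : g^[n] q = 0 := this
      rw [e, h]; simp
    · rw [K1 _ h] at this
      obtain ⟨x, hx, hxe⟩ := this
      rw [← hxe]
      have hx0 : 0 < x := (hl n).trans_le hx.1
      by_cases h' : s n < 0
      · have : c n = -1 := by simp [c, h']
        simp only [this]
        constructor <;> constructor <;> intro <;> linarith
      · have : c n = 1 := by simp [c, h']
        have h'' : 0 < s n := lt_of_le_of_ne (not_lt.mp h') (Ne.symm h)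
        simp only [this]
        constructor <;> constructor <;> intro <;> linarith

end G

/-- The contraction g(x) = (x³/5) sin(1/x) maps [-1,1] into itself, is 4/5-Lipschitz
there, has no 2-cycle, and is universal for the first Sharkovsky class on [-1,1]. -/
theorem stmt_14 (g : ℝ → ℝ) (hg0 : g 0 = 0)
    (hgx : ∀ x : ℝ, x ≠ 0 → g x = x ^ 3 / 5 * Real.sin (1 / x)) :
    Set.MapsTo g (Set.Icc (-1 : ℝ) 1) (Set.Icc (-1 : ℝ) 1) ∧
    (∀ x ∈ Set.Icc (-1 : ℝ) 1, ∀ y ∈ Set.Icc (-1 : ℝ) 1,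
      |g x - g y| ≤ 4 / 5 * |x - y|) ∧
    (¬ ∃ x ∈ Set.Icc (-1 : ℝ) 1, ∃ y ∈ Set.Icc (-1 : ℝ) 1,
      x ≠ y ∧ g x = y ∧ g y = x) ∧
    (∀ h : ℝ → ℝ,
      ContinuousOn h (Set.Icc (-1 : ℝ) 1) →
      Set.MapsTo h (Set.Icc (-1 : ℝ) 1) (Set.Icc (-1 : ℝ) 1) →
      (¬ ∃ x ∈ Set.Icc (-1 : ℝ) 1, ∃ y ∈ Set.Icc (-1 : ℝ) 1,
        x ≠ y ∧ h x = y ∧ h y = x) →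
      ∀ p ∈ Set.Icc (-1 : ℝ) 1, ∃ q ∈ Set.Icc (-1 : ℝ) 1,
        ∀ m n : ℕ, (h^[m] p < h^[n] p ↔ g^[m] q < g^[n] q)) := by
  refine ⟨g_maps hg0 hgx, g_lip hg0 hgx, ?_, ?_⟩
  · rintro ⟨x, hx, y, hy, hne, h1, h2⟩
    have := g_lip hg0 hgx x hx y hy
    rw [h1, h2, abs_sub_comm] at this
    have : 0 < |x - y| := abs_pos.mpr (sub_ne_zero.mpr hne)
    linarith
  · intro h hc hm h2 p hp
    have hno : NoTwo h := by
      intro x hx e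
      by_contra hne
      exact h2 ⟨x, hx, h x, hm hx, fun e' => hne e'.symm, rfl, e⟩
    obtain ⟨q, hq, hqs⟩ := realize hg0 hgx (fun n => h^[n] p - h^[n + 1] p) (by
      intro n hn
      have e : h^[n + 1] p = h^[n] p := by linarith
      simp only [Function.iterate_succ_apply'] at e ⊢
      rw [e, e, sub_self])
    refine ⟨q, hq, fun m n => ?_⟩
    have A := coded_lt (coded_h hc hm hno hp) m n
    have B := coded_lt (coded_g hg0 hgx hq) m n
    rw [A, B, (hqs m).2, (hqs n).1]
end
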